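/- (Lemma 2.) Let p be a prime with p ≡ 19 (mod 24) and let ω(p) denote the smallest prime factor of (p² − 1)/24. Then for every (x,y,z) ∈ 𝔽_p³ with x² + y² + z² = xyz, (x,y,z) ≠ (0,0,0) and z² ≠ 1, and every integer n ≥ 1 with fⁿ(x,y,z) = (x,y,z), one has n ≥ ω(p). -/

import Mathlib

/-- The automorphism `f = φ₁ ∘ φ₂` of the Markoff surface,
`f(x,y,z) = ((z²−1)x − zy, zx − y, z)`. -/
def markoffMap {R : Type*} [CommRing R] (P : R × R × R) : R × R × R :=
  ((P.2.2 ^ 2 - 1) * P.1 - P.2.2 * P.2.1, P.2.2 * P.1 - P.2.1, P.2.2)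

theorem mk_iter {K : Type*} [Field K] {F : Type*} [Field F] (φ : F →+* K) (z : F) (l : K)
    (hl : l ^ 2 - φ z * l + 1 = 0) (n : ℕ) :
    ∀ x y : F, l ^ (2 * n) * (φ (markoffMap^[n] (x, y, z)).1 - l * φ (markoffMap^[n] (x, y, z)).2.1)
      = φ x - l * φ y := by
  induction n with
  | zero => intro x y; simp
  | succ n ih =>
    intro x y
    rw [Function.iterate_succ_apply]
    have h1 : markoffMap (x, y, z) = ((z ^ 2 - 1) * x - z * y, z * x - y, z) := rfl
    rw [h1]
    have := ih ((z ^ 2 - 1) * x - z * y) (z * x - y)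
    rw [show 2 * (n + 1) = 2 + 2 * n by ring, pow_add, mul_assoc, this]
    simp only [map_sub, map_mul, map_pow, map_one]
    generalize φ z = Z at *
    generalize φ x = X at *
    generalize φ y = Y at *
    have h2 : l ^ 2 = Z * l - 1 := by linear_combination hl
    have h3 : l ^ 2 * (Z ^ 2 - 1 - l * Z) = 1 := by
      linear_combination (-l * Z - 1) * hl
    have h4 : l ^ 2 * (-Z + l) = -l := by linear_combination l * hl
    linear_combination X * h3 + Y * h4

theorem stmt_11 (p : ℕ) (hp : p.Prime) (hp24 : p % 24 = 19)
    (x y z : ZMod p)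
    (hM : x ^ 2 + y ^ 2 + z ^ 2 = x * y * z)
    (hne : (x, y, z) ≠ (0, 0, 0))
    (hz : z ^ 2 ≠ 1)
    (n : ℕ) (hn : 1 ≤ n)
    (hper : markoffMap^[n] (x, y, z) = (x, y, z)) :
    ((p ^ 2 - 1) / 24).minFac ≤ n := by
  have : Fact p.Prime := ⟨hp⟩
  have hns : ¬ IsSquare (-1 : ZMod p) := by
    rw [ZMod.exists_sq_eq_neg_one_iff]; omega
  have key : ∀ a b : ZMod p, a ^ 2 + b ^ 2 = 0 → b = 0 := by
    intro a b h
    by_contra hb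
    apply hns
    refine ⟨a / b, ?_⟩
    field_simp
    linear_combination -h
  have hz0 : z ≠ 0 := by
    rintro rfl
    have h : x ^ 2 + y ^ 2 = 0 := by linear_combination hM
    have hy := key x y h
    have hx := key y x (by linear_combination h)
    exact hne (by rw [hx, hy])
  let K := AlgebraicClosure (ZMod p)
  let φ : ZMod p →+* K := algebraMap (ZMod p) K
  have hφ : Function.Injective φ := φ.injective
  have : CharP K p := charP_of_injective_algebraMap hφ p
  have h2 : (2 : K) ≠ 0 := by
    intro h
    have : ((2 : ℕ) : K) = 0 := by exact_mod_cast h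
    rw [CharP.cast_eq_zero_iff K p] at this
    have := Nat.le_of_dvd (by norm_num) this
    omega
  obtain ⟨l, hl⟩ : ∃ l : K, l ^ 2 - φ z * l + 1 = 0 := by
    obtain ⟨s, hs⟩ := IsAlgClosed.exists_eq_mul_self ((φ z) ^ 2 - 4)
    refine ⟨(φ z + s) / 2, ?_⟩
    have h3 : (φ z + s) / 2 * 2 = φ z + s := div_mul_cancel₀ _ h2
    generalize (φ z + s) / 2 = t at h3
    apply mul_left_cancel₀ (pow_ne_zero 2 h2)
    linear_combination (2 * t + φ z + s - 2 * φ z) * h3 - hs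
  have hl0 : l ≠ 0 := by
    rintro rfl
    simp at hl
  have hZ0 : φ z ≠ 0 := by simpa using hz0
  have hMK : φ x ^ 2 + φ y ^ 2 + φ z ^ 2 = φ x * φ y * φ z := by
    simpa using congrArg φ hM
  have hw : (φ x - l * φ y) ≠ 0 := by
    intro h
    apply pow_ne_zero 2 hZ0
    linear_combination hMK - (φ x - (φ z - l) * φ y) * h - (φ y) ^ 2 * hl
  have hit := mk_iter φ z l hl n x y
  rw [hper] at hit
  have hln : (l ^ 2) ^ n = 1 := by
    rw [← pow_mul]
    exact mul_right_cancel₀ hw (by rw [one_mul]; exact hit)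
  have hfr : (l ^ p) ^ 2 - φ z * l ^ p + 1 = 0 := by
    have h := congrArg (frobenius K p) hl
    simp only [map_sub, map_add, map_mul, map_pow, map_one, map_zero] at h
    have hzz : frobenius K p (φ z) = φ z := by
      rw [← RingHom.map_frobenius, frobenius_def, ZMod.pow_card]
    rw [hzz] at h
    simpa [frobenius_def] using h
  have hor : l ^ (p - 1) = 1 ∨ l ^ (p + 1) = 1 := by
    have h : (l ^ p - l) * (l ^ p * l - 1) = 0 := by
      linear_combination l * hfr - l ^ p * hl
    rcases mul_eq_zero.mp h with h | h
    · left
      apply mul_right_cancel₀ hl0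
      rw [← pow_succ, Nat.sub_add_cancel hp.one_le]
      linear_combination h
    · right
      rw [pow_succ]; linear_combination h
  have hμ1 : l ^ 2 ≠ 1 := by
    intro h
    have h4 : (φ z) ^ 2 = 4 := by
      have : φ z * l = 2 := by linear_combination h - hl
      linear_combination (φ z * l + 2) * this - (φ z) ^ 2 * h
    have h4' : z ^ 2 = 4 := hφ (by rw [map_pow, h4]; exact (map_ofNat φ 4).symm)
    have h5 : (x - z / 2 * y) ^ 2 + z ^ 2 = 0 := by
      have h2' : (2 : ZMod p) ≠ 0 := fun h => h2 (by rw [← map_ofNat φ 2]; exact (congrArg φ h).trans (map_zero φ))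
      field_simp
      linear_combination 4 * hM + y ^ 2 * h4'
    exact hz0 (key _ _ h5)
  obtain ⟨k, hk⟩ : ∃ k, p = 24 * k + 19 := ⟨p / 24, by omega⟩
  have hN : (p ^ 2 - 1) / 24 = (4 * k + 3) * (6 * k + 5) := by
    have : p ^ 2 - 1 = 24 * ((4 * k + 3) * (6 * k + 5)) := by
      rw [hk]
      apply Nat.sub_eq_of_eq_add
      ring
    rw [this]; simp
  rw [hN]
  set d := orderOf (l ^ 2) with hd
  have hdn : d ∣ n := orderOf_dvd_of_pow_eq_one hln
  by_contra hlt
  push Not at hlt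
  have hcop : Nat.Coprime d ((4 * k + 3) * (6 * k + 5)) := by
    by_contra hc
    obtain ⟨q, hq, hq1, hq2⟩ := Nat.Prime.not_coprime_iff_dvd.mp hc
    have := Nat.minFac_le_of_dvd hq.two_le hq2
    have := Nat.le_of_dvd hn (hq1.trans hdn)
    omega
  rcases hor with h | h
  · have hdd : d ∣ 3 * (4 * k + 3) := orderOf_dvd_of_pow_eq_one (by
      rw [← pow_mul, ← h]; congr 1; omega)
    have h3 := orderOf_dvd_iff_pow_eq_one.mp (hcop.coprime_mul_right_right.dvd_of_dvd_mul_right hdd)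
    have h6 : l ^ 4 + l ^ 2 + 1 = 0 := by
      apply mul_left_cancel₀ (sub_ne_zero.mpr hμ1)
      linear_combination h3
    have h7 : (φ z) ^ 2 = 1 := by
      apply mul_left_cancel₀ (pow_ne_zero 2 hl0)
      linear_combination h6 - (l ^ 2 + 1 + φ z * l) * hl
    exact hz (hφ (by simpa using h7))
  · have hdd : d ∣ 2 * (6 * k + 5) := orderOf_dvd_of_pow_eq_one (by
      rw [← pow_mul, ← h]; congr 1; omega)
    have h3 := orderOf_dvd_iff_pow_eq_one.mp (hcop.coprime_mul_left_right.dvd_of_dvd_mul_right hdd)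
    have h6 : l ^ 2 + 1 = 0 := by
      apply mul_left_cancel₀ (sub_ne_zero.mpr hμ1)
      linear_combination h3
    apply hZ0
    apply mul_left_cancel₀ hl0
    linear_combination h6 - hl
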